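/- Let σ > 0, r, q ∈ ℝ, K > 0, T > 0, R_B, R_C ∈ [0,1], λ_B, λ_C ≥ 0, and s_F ≥ 0, and set λ' = (1−R_C)λ_C + s_F. Then the function u(s,t) = e^{-λ' t}·C(s,K,t), where C(s,K,t) = s·e^{-q t}·N(d₁(s,K,t)) − K·e^{-r t}·N(d₂(s,K,t)) is the Black–Scholes call price, is nonnegative and satisfies the counterparty credit risk PDE ∂u/∂t − (1/2)σ²s² ∂²u/∂s² − (r−q)s ∂u/∂s + r u = −(1−R_B)λ_B·min(u,0) − ((1−R_C)λ_C + s_F)·max(u,0) at every point (s,t) with s > 0 and 0 < t ≤ T. -/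

import Mathlib

open Real Set

/-- The standard normal cumulative distribution function. -/
noncomputable def stdNormalCDF (x : ℝ) : ℝ :=
  ∫ y in Set.Iic x, (Real.sqrt (2 * Real.pi))⁻¹ * Real.exp (-(y ^ 2) / 2)

/-- d₁(s,K,t) in the Black–Scholes formula. -/
noncomputable def d1 (σ r q s K t : ℝ) : ℝ :=
  (Real.log (s / K) + (r - q + σ ^ 2 / 2) * t) / (σ * Real.sqrt t)

/-- d₂(s,K,t) in the Black–Scholes formula. -/
noncomputable def d2 (σ r q s K t : ℝ) : ℝ :=
  d1 σ r q s K t - σ * Real.sqrt t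

/-- The Black–Scholes European call price. -/
noncomputable def callPrice (σ r q K s t : ℝ) : ℝ :=
  s * Real.exp (-q * t) * stdNormalCDF (d1 σ r q s K t)
    - K * Real.exp (-r * t) * stdNormalCDF (d2 σ r q s K t)

/-- The Black–Scholes European put price. -/
noncomputable def putPrice (σ r q K s t : ℝ) : ℝ :=
  K * Real.exp (-r * t) * stdNormalCDF (-(d2 σ r q s K t))
    - s * Real.exp (-q * t) * stdNormalCDF (-(d1 σ r q s K t))

/-- The standard normal probability density function. -/
noncomputable def stdNormalPDF (x : ℝ) : ℝ :=
  (Real.sqrt (2 * Real.pi))⁻¹ * Real.exp (-(x ^ 2) / 2)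

/-!
On nonnegative functions the right-hand side of the XVA equation is the linear term `-λ' u`, and
multiplying a solution of the Black–Scholes equation by `exp (-λ' t)` produces exactly this term.
So it is enough that the call price `C` is nonnegative and solves the Black–Scholes equation.

Both facts rest on the identity `K e^{-rt} φ(d₂) = s e^{-qt} φ(d₁)`, where `φ` is the standard
normal density. In the first derivatives of `C` it reduces the contributions of the derivatives of
`d₁` and `d₂` to their difference, and it turns `0 ≤ C` into `N(d₂) / φ(d₂) ≤ N(d₁) / φ(d₁)`; the
ratio `N / φ` is increasing because `φ` is log-concave.
-/

open MeasureTheory ProbabilityTheory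
open scoped Topology

theorem hasDerivAt_integral_Iic {E : Type*} [NormedAddCommGroup E] [NormedSpace ℝ E]
    [CompleteSpace E] {f : ℝ → E} {x : ℝ} (hf : ∀ b, IntegrableOn f (Iic b))
    (hcont : ContinuousAt f x) : HasDerivAt (fun b => ∫ y in Iic b, f y) (f x) x := by
  have hsplit : (fun b => ∫ y in Iic b, f y) = fun b => (∫ y in Iic x, f y) + ∫ y in x..b, f y := by
    funext b
    rw [← intervalIntegral.integral_Iic_sub_Iic (hf x) (hf b), add_sub_cancel]
  have hmeas : StronglyMeasurableAtFilter f (𝓝 x) :=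
    ⟨Iic (x + 1), Iic_mem_nhds (lt_add_one x), (hf (x + 1)).aestronglyMeasurable⟩
  rw [hsplit]
  exact (intervalIntegral.integral_hasDerivAt_right IntervalIntegrable.refl
    hmeas hcont).const_add _

theorem hasDerivAt_exp_const_mul (c t : ℝ) :
    HasDerivAt (fun τ => exp (c * τ)) (c * exp (c * t)) t := by
  simpa [mul_comm] using ((hasDerivAt_id t).const_mul c).exp

theorem stdNormalPDF_eq_gaussianPDFReal : stdNormalPDF = gaussianPDFReal 0 1 := by
  funext x
  simp [stdNormalPDF, gaussianPDFReal]

theorem integrable_stdNormalPDF : Integrable stdNormalPDF :=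
  stdNormalPDF_eq_gaussianPDFReal ▸ integrable_gaussianPDFReal 0 1

theorem stdNormalPDF_pos (x : ℝ) : 0 < stdNormalPDF x :=
  stdNormalPDF_eq_gaussianPDFReal ▸ gaussianPDFReal_pos 0 1 x one_ne_zero

theorem continuous_stdNormalPDF : Continuous stdNormalPDF := by
  unfold stdNormalPDF
  fun_prop

theorem hasDerivAt_stdNormalCDF (x : ℝ) : HasDerivAt stdNormalCDF (stdNormalPDF x) x :=
  hasDerivAt_integral_Iic (fun _ => integrable_stdNormalPDF.integrableOn)
    continuous_stdNormalPDF.continuousAt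

theorem stdNormalCDF_eq_integral_Iic_zero (x : ℝ) :
    stdNormalCDF x = ∫ u in Iic 0, stdNormalPDF (x + u) := by
  have hpre : (fun u => x + u) ⁻¹' Iic x = Iic 0 := by simp
  rw [← hpre]
  exact ((measurePreserving_add_left volume x).setIntegral_preimage_emb
    (measurableEmbedding_addLeft x) stdNormalPDF (Iic x)).symm

theorem stdNormalPDF_mul_add_le {x y u : ℝ} (hxy : x ≤ y) (hu : u ≤ 0) :
    stdNormalPDF y * stdNormalPDF (x + u) ≤ stdNormalPDF x * stdNormalPDF (y + u) := by
  simp only [stdNormalPDF, mul_mul_mul_comm _ (exp _), ← exp_add]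
  gcongr _ * exp ?_
  linarith [mul_le_mul_of_nonpos_right hxy hu]

theorem monotone_stdNormalCDF_div_stdNormalPDF :
    Monotone fun x => stdNormalCDF x / stdNormalPDF x := by
  intro x y hxy
  have hint (z c : ℝ) : IntegrableOn (fun u => c * stdNormalPDF (z + u)) (Iic 0) :=
    ((integrable_stdNormalPDF.comp_add_left z).const_mul c).integrableOn
  rw [div_le_div_iff₀ (stdNormalPDF_pos x) (stdNormalPDF_pos y), mul_comm,
    mul_comm (stdNormalCDF y),
    stdNormalCDF_eq_integral_Iic_zero, stdNormalCDF_eq_integral_Iic_zero,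
    ← integral_const_mul, ← integral_const_mul]
  exact setIntegral_mono_on (hint x _) (hint y _) measurableSet_Iic
    fun u hu => stdNormalPDF_mul_add_le hxy hu

theorem hasDerivAt_mul_stdNormalCDF_sub {A B a b : ℝ → ℝ} {A' B' a' b' x : ℝ}
    (hA : HasDerivAt A A' x) (hB : HasDerivAt B B' x)
    (ha : HasDerivAt a a' x) (hb : HasDerivAt b b' x)
    (hAB : B x * stdNormalPDF (b x) = A x * stdNormalPDF (a x)) :
    HasDerivAt (fun y => A y * stdNormalCDF (a y) - B y * stdNormalCDF (b y))
      (A' * stdNormalCDF (a x) - B' * stdNormalCDF (b x)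
        + A x * stdNormalPDF (a x) * (a' - b')) x := by
  refine ((hA.mul ((hasDerivAt_stdNormalCDF _).comp x ha)).sub
    (hB.mul ((hasDerivAt_stdNormalCDF _).comp x hb))).congr_deriv ?_
  simp only [Function.comp_apply]
  linear_combination -b' * hAB

section BlackScholes

variable {σ r q K s t : ℝ}

theorem d1_sq_sub_d2_sq (hσ : σ ≠ 0) (ht : 0 < t) :
    d1 σ r q s K t ^ 2 - d2 σ r q s K t ^ 2 = 2 * (log (s / K) + (r - q) * t) := by
  have hd1 : d1 σ r q s K t * (σ * √t) = log (s / K) + (r - q + σ ^ 2 / 2) * t :=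
    div_mul_cancel₀ _ (mul_ne_zero hσ (sqrt_pos.2 ht).ne')
  rw [d2]
  linear_combination 2 * hd1 - σ ^ 2 * sq_sqrt ht.le

theorem strike_mul_stdNormalPDF_d2 (hσ : σ ≠ 0) (hK : 0 < K) (hs : 0 < s) (ht : 0 < t) :
    K * exp (-r * t) * stdNormalPDF (d2 σ r q s K t)
      = s * exp (-q * t) * stdNormalPDF (d1 σ r q s K t) := by
  have hexp : -(d2 σ r q s K t) ^ 2 / 2
      = -(d1 σ r q s K t) ^ 2 / 2 + (log (s / K) + (r * t + -q * t)) := by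
    linear_combination d1_sq_sub_d2_sq (r := r) (q := q) (s := s) (K := K) hσ ht / 2
  simp only [stdNormalPDF, hexp, exp_add, exp_log (div_pos hs hK), neg_mul r t, exp_neg (r * t)]
  field_simp

theorem callPrice_nonneg (hσ : 0 < σ) (hK : 0 < K) (hs : 0 < s) (ht : 0 < t) :
    0 ≤ callPrice σ r q K s t := by
  have hd : d2 σ r q s K t ≤ d1 σ r q s K t := sub_le_self _ (by positivity)
  have hφ (x : ℝ) : stdNormalPDF x ≠ 0 := (stdNormalPDF_pos x).ne'
  set x₁ := d1 σ r q s K t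
  set x₂ := d2 σ r q s K t
  refine sub_nonneg.2 ?_
  calc K * exp (-r * t) * stdNormalCDF x₂
      = K * exp (-r * t) * stdNormalPDF x₂ * (stdNormalCDF x₂ / stdNormalPDF x₂) := by
        rw [mul_assoc _ (stdNormalPDF x₂), mul_div_cancel₀ _ (hφ x₂)]
    _ = s * exp (-q * t) * stdNormalPDF x₁ * (stdNormalCDF x₂ / stdNormalPDF x₂) := by
        rw [strike_mul_stdNormalPDF_d2 hσ.ne' hK hs ht]
    _ ≤ s * exp (-q * t) * stdNormalPDF x₁ * (stdNormalCDF x₁ / stdNormalPDF x₁) := by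
        have := stdNormalPDF_pos x₁
        exact mul_le_mul_of_nonneg_left (monotone_stdNormalCDF_div_stdNormalPDF hd) (by positivity)
    _ = s * exp (-q * t) * stdNormalCDF x₁ := by
        rw [mul_assoc _ (stdNormalPDF x₁), mul_div_cancel₀ _ (hφ x₁)]

theorem hasDerivAt_d1_spot (hK : K ≠ 0) (hs : s ≠ 0) :
    HasDerivAt (fun x => d1 σ r q x K t) (1 / s / (σ * √t)) s := by
  refine (((((hasDerivAt_id s).div_const K).log (div_ne_zero hs hK)).add_const
    ((r - q + σ ^ 2 / 2) * t)).div_const (σ * √t)).congr_deriv ?_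
  rw [id, div_div_div_cancel_right₀ hK]

theorem hasDerivAt_callPrice_spot (hσ : σ ≠ 0) (hK : 0 < K) (hs : 0 < s) (ht : 0 < t) :
    HasDerivAt (fun x => callPrice σ r q K x t)
      (exp (-q * t) * stdNormalCDF (d1 σ r q s K t)) s := by
  have hd1 := hasDerivAt_d1_spot (σ := σ) (r := r) (q := q) (t := t) hK.ne' hs.ne'
  refine (hasDerivAt_mul_stdNormalCDF_sub ((hasDerivAt_id s).mul_const (exp (-q * t)))
    (hasDerivAt_const s (K * exp (-r * t))) hd1 (hd1.sub_const (σ * √t))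
    (strike_mul_stdNormalPDF_d2 hσ hK hs ht)).congr_deriv ?_
  ring

theorem deriv_deriv_callPrice_spot (hσ : σ ≠ 0) (hK : 0 < K) (hs : 0 < s) (ht : 0 < t) :
    deriv (fun x => deriv (fun y => callPrice σ r q K y t) x) s
      = exp (-q * t) * (stdNormalPDF (d1 σ r q s K t) * (1 / s / (σ * √t))) := by
  have hdelta : (fun x => deriv (fun y => callPrice σ r q K y t) x)
      =ᶠ[𝓝 s] fun x => exp (-q * t) * stdNormalCDF (d1 σ r q x K t) := by
    filter_upwards [Ioi_mem_nhds hs] with x hx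
    exact (hasDerivAt_callPrice_spot hσ hK hx ht).deriv
  rw [hdelta.deriv_eq]
  exact (((hasDerivAt_stdNormalCDF _).comp s
    (hasDerivAt_d1_spot hK.ne' hs.ne')).const_mul (exp (-q * t))).deriv

theorem hasDerivAt_callPrice_time (hσ : σ ≠ 0) (hK : 0 < K) (hs : 0 < s) (ht : 0 < t) :
    HasDerivAt (fun τ => callPrice σ r q K s τ)
      (s * (-q * exp (-q * t)) * stdNormalCDF (d1 σ r q s K t)
        - K * (-r * exp (-r * t)) * stdNormalCDF (d2 σ r q s K t)
        + s * exp (-q * t) * stdNormalPDF (d1 σ r q s K t) * (σ * (1 / (2 * √t)))) t := by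
  have hvol : HasDerivAt (fun τ => σ * √τ) (σ * (1 / (2 * √t))) t :=
    (hasDerivAt_sqrt ht.ne').const_mul σ
  have hd1 : HasDerivAt (fun τ => d1 σ r q s K τ) _ t :=
    (((hasDerivAt_id t).const_mul (r - q + σ ^ 2 / 2)).const_add (log (s / K))).div hvol
      (mul_ne_zero hσ (sqrt_pos.2 ht).ne')
  have hd2 : HasDerivAt (fun τ => d2 σ r q s K τ) _ t := hd1.sub hvol
  refine (hasDerivAt_mul_stdNormalCDF_sub ((hasDerivAt_exp_const_mul (-q) t).const_mul s)
    ((hasDerivAt_exp_const_mul (-r) t).const_mul K) hd1 hd2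
    (strike_mul_stdNormalPDF_d2 hσ hK hs ht)).congr_deriv ?_
  rw [sub_sub_cancel]

/-- The Black–Scholes operator `∂u/∂t - (1/2)σ²s² ∂²u/∂s² - (r - q)s ∂u/∂s + r u` applied to `u` at
the point `(s, t)`, where `t` is the time to maturity. The partial derivatives are `deriv`s, hence
zero where they do not exist. -/
noncomputable def blackScholesOp (σ r q : ℝ) (u : ℝ → ℝ → ℝ) (s t : ℝ) : ℝ :=
  deriv (fun τ => u s τ) t - (1 / 2) * σ ^ 2 * s ^ 2 * deriv (fun x => deriv (fun y => u y t) x) s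
    - (r - q) * s * deriv (fun x => u x t) s + r * u s t

theorem blackScholesOp_callPrice (hσ : σ ≠ 0) (hK : 0 < K) (hs : 0 < s) (ht : 0 < t) :
    blackScholesOp σ r q (callPrice σ r q K) s t = 0 := by
  have hsqrt : √t ≠ 0 := (sqrt_pos.2 ht).ne'
  rw [blackScholesOp, (hasDerivAt_callPrice_time hσ hK hs ht).deriv,
    deriv_deriv_callPrice_spot hσ hK hs ht, (hasDerivAt_callPrice_spot hσ hK hs ht).deriv,
    callPrice]
  field_simp
  ring

theorem blackScholesOp_exp_mul {u : ℝ → ℝ → ℝ} (c : ℝ)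
    (hu : DifferentiableAt ℝ (fun τ => u s τ) t) :
    blackScholesOp σ r q (fun x τ => exp (c * τ) * u x τ) s t
      = exp (c * t) * (blackScholesOp σ r q u s t + c * u s t) := by
  have htime : deriv (fun τ => exp (c * τ) * u s τ) t
      = c * exp (c * t) * u s t + exp (c * t) * deriv (fun τ => u s τ) t :=
    ((hasDerivAt_exp_const_mul c t).mul hu.hasDerivAt).deriv
  simp only [blackScholesOp, htime, deriv_const_mul_field]
  ring

end BlackScholes

theorem discounted_call_solves_xva_pde_general {σ r q K s t : ℝ} (a b : ℝ)
    (hσ : 0 < σ) (hK : 0 < K) (hs : 0 < s) (ht : 0 < t) :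
    0 ≤ exp (-b * t) * callPrice σ r q K s t ∧
      blackScholesOp σ r q (fun x τ => exp (-b * τ) * callPrice σ r q K x τ) s t
        = a * min (exp (-b * t) * callPrice σ r q K s t) 0
          - b * max (exp (-b * t) * callPrice σ r q K s t) 0 := by
  have hu : 0 ≤ exp (-b * t) * callPrice σ r q K s t :=
    mul_nonneg (exp_pos _).le (callPrice_nonneg hσ hK hs ht)
  refine ⟨hu, ?_⟩
  rw [min_eq_right hu, max_eq_left hu,
    blackScholesOp_exp_mul _ (hasDerivAt_callPrice_time hσ.ne' hK hs ht).differentiableAt,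
    blackScholesOp_callPrice hσ.ne' hK hs ht]
  ring

/-- The discounted call u(s,t) = e^{-λ't}·C(s,K,t), with λ' = (1−R_C)λ_C + s_F,
    is nonnegative and satisfies the Burgard–Kjaer counterparty credit risk PDE. -/
theorem discounted_call_solves_xva_pde
    (σ r q K T RB RC lamB lamC sF : ℝ)
    (hσ : 0 < σ) (hK : 0 < K) (hT : 0 < T)
    (hRB : RB ∈ Set.Icc (0 : ℝ) 1) (hRC : RC ∈ Set.Icc (0 : ℝ) 1)
    (hlamB : 0 ≤ lamB) (hlamC : 0 ≤ lamC) (hsF : 0 ≤ sF) :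
    ∀ s t : ℝ, 0 < s → 0 < t → t ≤ T →
      (0 ≤ Real.exp (-((1 - RC) * lamC + sF) * t) * callPrice σ r q K s t) ∧
      (deriv (fun τ => Real.exp (-((1 - RC) * lamC + sF) * τ) * callPrice σ r q K s τ) t
        - (1 / 2) * σ ^ 2 * s ^ 2 *
            deriv (fun x =>
              deriv (fun y =>
                Real.exp (-((1 - RC) * lamC + sF) * t) * callPrice σ r q K y t) x) s
        - (r - q) * s *
            deriv (fun x =>
              Real.exp (-((1 - RC) * lamC + sF) * t) * callPrice σ r q K x t) s
        + r * (Real.exp (-((1 - RC) * lamC + sF) * t) * callPrice σ r q K s t)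
      = -(1 - RB) * lamB *
            min (Real.exp (-((1 - RC) * lamC + sF) * t) * callPrice σ r q K s t) 0
        - ((1 - RC) * lamC + sF) *
            max (Real.exp (-((1 - RC) * lamC + sF) * t) * callPrice σ r q K s t) 0) :=
  fun _ _ hs ht _ => discounted_call_solves_xva_pde_general (-(1 - RB) * lamB) _ hσ hK hs ht
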